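/- Let (Σ_A, σ) be a one-sided topological Markov shift over a finite alphabet, and ψ, φ continuous with ψ > 0. If μ is a σ-invariant Gibbs measure for ψ and φ (i.e., ∃ K > 1 with K⁻¹ ≤ μ(C_{i₁…i_n}) / exp[−S_nψ(ω)·P_ψ(φ) + S_nφ(ω)] ≤ K for all cylinders and ω in them), then μ is an equilibrium measure for ψ and φ: (h_μ(σ) + ∫φ dμ)/∫ψ dμ = P_ψ(φ). -/

import Mathlib

open MeasureTheory Filter Topology Set

variable {X : Type*}

/-- Birkhoff sum `S_n φ (x) = ∑_{i<n} φ(f^i x)`. -/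
noncomputable def birkhoff (f : X → X) (φ : X → ℝ) (n : ℕ) (x : X) : ℝ :=
  ∑ i ∈ Finset.range n, φ (f^[i] x)

/-- The `n`-th Bowen metric. -/
noncomputable def dynDist [MetricSpace X] (f : X → X) (n : ℕ) (x y : X) : ℝ :=
  ⨆ i : Fin n, dist (f^[(i : ℕ)] x) (f^[(i : ℕ)] y)

/-- `F` is an `(n,ε)`-spanning set of `Z`. -/
def IsSpanningSet [MetricSpace X] (f : X → X) (n : ℕ) (ε : ℝ) (Z : Set X) (F : Finset X) : Prop :=
  ∀ y ∈ Z, ∃ x ∈ F, dynDist f n x y ≤ ε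

/-- `E` is `(n,ε)`-separated. -/
def IsSeparatedSet [MetricSpace X] (f : X → X) (n : ℕ) (ε : ℝ) (E : Finset X) : Prop :=
  ∀ x ∈ E, ∀ y ∈ E, x ≠ y → ε < dynDist f n x y

/-- `S_T = {n : ∃ x, S_n ψ(x) ≤ T < S_{n+1} ψ(x)}`. -/
def STset (f : X → X) (ψ : X → ℝ) (T : ℝ) : Set ℕ :=
  {n | ∃ x : X, birkhoff f ψ n x ≤ T ∧ T < birkhoff f ψ (n + 1) x}

/-- `X_n = {x : S_n ψ(x) ≤ T < S_{n+1} ψ(x)}`. -/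
def Xset (f : X → X) (ψ : X → ℝ) (T : ℝ) (n : ℕ) : Set X :=
  {x | birkhoff f ψ n x ≤ T ∧ T < birkhoff f ψ (n + 1) x}

/-- `Q_{ψ,T}(f,φ,ε)`, the spanning-set quantity. -/
noncomputable def Qspan [MetricSpace X] (f : X → X) (φ ψ : X → ℝ) (T ε : ℝ) : ℝ :=
  sInf { r : ℝ | ∃ F : ℕ → Finset X,
    (∀ n ∈ STset f ψ T, IsSpanningSet f n ε (Xset f ψ T n) (F n)) ∧
    r = ∑' n : ℕ, Set.indicator (STset f ψ T)
        (fun n => ∑ x ∈ F n, Real.exp (birkhoff f φ n x)) n }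

/-- `P_{ψ,T}(f,φ,ε)`, the separated-set quantity. -/
noncomputable def Psep [MetricSpace X] (f : X → X) (φ ψ : X → ℝ) (T ε : ℝ) : ℝ :=
  sSup { r : ℝ | ∃ E : ℕ → Finset X,
    (∀ n ∈ STset f ψ T, (E n : Set X) ⊆ Xset f ψ T n ∧ IsSeparatedSet f n ε (E n)) ∧
    r = ∑' n : ℕ, Set.indicator (STset f ψ T)
        (fun n => ∑ x ∈ E n, Real.exp (birkhoff f φ n x)) n }

/-- The `ψ`-induced topological pressure of `φ`. -/
noncomputable def inducedPressure [MetricSpace X] (f : X → X) (φ ψ : X → ℝ) : EReal :=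
  ⨆ (ε : ℝ) (_ : 0 < ε),
    Filter.limsup (fun T : ℝ => ((T⁻¹ * Real.log (Qspan f φ ψ T ε) : ℝ) : EReal)) atTop

/-- Largest sum over `(n,ε)`-separated sets of `X`. -/
noncomputable def sepSum [MetricSpace X] (f : X → X) (φ : X → ℝ) (n : ℕ) (ε : ℝ) : ℝ :=
  sSup { r : ℝ | ∃ E : Finset X, IsSeparatedSet f n ε E ∧
    r = ∑ x ∈ E, Real.exp (birkhoff f φ n x) }

/-- The classical (Walters) topological pressure. -/
noncomputable def topPressure [MetricSpace X] (f : X → X) (φ : X → ℝ) : EReal :=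
  ⨆ (ε : ℝ) (_ : 0 < ε),
    Filter.limsup (fun n : ℕ => (((n : ℝ)⁻¹ * Real.log (sepSum f φ n ε) : ℝ) : EReal)) atTop
/-- The cell of the dynamical refinement `⋁_{i<n} f^{-i} P` indexed by itinerary `w`. -/
noncomputable def cellOf (f : X → X) {k n : ℕ} (P : Fin k → Set X) (w : Fin n → Fin k) : Set X :=
  ⋂ i : Fin n, f^[(i : ℕ)] ⁻¹' P (w i)

/-- `P` is a finite measurable partition of `X`. -/
def IsMeasPartition [MeasurableSpace X] {k : ℕ} (P : Fin k → Set X) : Prop :=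
  (∀ i, MeasurableSet (P i)) ∧ Pairwise (Function.onFun Disjoint P) ∧ (⋃ i, P i) = Set.univ

/-- Entropy `H(⋁_{i<n} f^{-i} P)` of the `n`-th dynamical refinement. -/
noncomputable def partitionEntropy [MeasurableSpace X] (μ : Measure X) (f : X → X)
    {k : ℕ} (P : Fin k → Set X) (n : ℕ) : ℝ :=
  ∑ w : Fin n → Fin k, Real.negMulLog (μ (cellOf f P w)).toReal

/-- Kolmogorov–Sinai (measure-theoretic) entropy `h_μ(f)`. -/
noncomputable def ksEntropy [MeasurableSpace X] (μ : Measure X) (f : X → X) : EReal :=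
  ⨆ (k : ℕ) (P : Fin k → Set X) (_ : IsMeasPartition P),
    ⨅ n : ℕ, ((((n : ℝ) + 1)⁻¹ * partitionEntropy μ f P (n + 1) : ℝ) : EReal)

/-- `μ` is an equilibrium measure for `ψ` and `φ`:
`(h_μ(f) + ∫ φ dμ) / ∫ ψ dμ = P_ψ(φ)` (written multiplicatively in `EReal`). -/
noncomputable def IsEquilibriumMeasure [MetricSpace X] [MeasurableSpace X]
    (f : X → X) (φ ψ : X → ℝ) (μ : Measure X) : Prop :=
  (ksEntropy μ f + ((∫ x, φ x ∂μ : ℝ) : EReal)) * (((∫ x, ψ x ∂μ)⁻¹ : ℝ) : EReal)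
    = inducedPressure f φ ψ

/-! ### One-sided topological Markov shifts over a finite alphabet -/

attribute [local instance] PiNat.metricSpace

/-- The one-sided topological Markov shift `Σ_A` determined by the 0-1 transition
matrix `A` over the alphabet `Fin k`, with the metric `dist ω ω' = (1/2)^{|ω ∧ ω'|}`. -/
def SigmaA {k : ℕ} (A : Fin k → Fin k → Bool) : Type :=
  {ω : ℕ → Fin k // ∀ n : ℕ, A (ω n) (ω (n + 1)) = true}

noncomputable instance {k : ℕ} (A : Fin k → Fin k → Bool) : MetricSpace (SigmaA A) :=
  Subtype.metricSpace

noncomputable instance {k : ℕ} (A : Fin k → Fin k → Bool) : MeasurableSpace (SigmaA A) :=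
  borel _

/-- The shift map `σ : Σ_A → Σ_A`. -/
def shiftMap {k : ℕ} (A : Fin k → Fin k → Bool) : SigmaA A → SigmaA A :=
  fun ω => ⟨fun n => ω.1 (n + 1), fun n => ω.2 (n + 1)⟩

/-- The cylinder set `C_{w₀ … w_{n-1}}`. -/
def cylinderSet {k : ℕ} (A : Fin k → Fin k → Bool) {n : ℕ} (w : Fin n → Fin k) :
    Set (SigmaA A) :=
  {ω | ∀ i : Fin n, ω.1 (i : ℕ) = w i}

/-- `μ` is a Gibbs measure for `ψ` and `φ` with constant `K`:
`K⁻¹ ≤ μ(C_{i₁…i_n}) / exp[-S_nψ(ω)·P_ψ(φ) + S_nφ(ω)] ≤ K` on every cylinder. -/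
def IsGibbsMeasure {k : ℕ} (A : Fin k → Fin k → Bool) (φ ψ : SigmaA A → ℝ)
    (μ : Measure (SigmaA A)) (K : ℝ) : Prop :=
  ∀ (n : ℕ) (w : Fin n → Fin k), ∀ ω ∈ cylinderSet A w,
    K⁻¹ ≤ (μ (cylinderSet A w)).toReal /
        Real.exp (-(birkhoff (shiftMap A) ψ n ω) * (inducedPressure (shiftMap A) φ ψ).toReal
          + birkhoff (shiftMap A) φ n ω) ∧
    (μ (cylinderSet A w)).toReal /
        Real.exp (-(birkhoff (shiftMap A) ψ n ω) * (inducedPressure (shiftMap A) φ ψ).toReal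
          + birkhoff (shiftMap A) φ n ω) ≤ K

instance {k : ℕ} (A : Fin k → Fin k → Bool) : BorelSpace (SigmaA A) := ⟨rfl⟩

theorem SigmaA.continuous_coord {k : ℕ} (A : Fin k → Fin k → Bool) (n : ℕ) :
    Continuous (fun ω : SigmaA A => ω.1 n) :=
  (continuous_apply n).comp continuous_subtype_val

instance {k : ℕ} (A : Fin k → Fin k → Bool) : CompactSpace (SigmaA A) := by
  have h : IsClosed {ω : ℕ → Fin k | ∀ n : ℕ, A (ω n) (ω (n + 1)) = true} := by
    rw [Set.ofPred_forall]
    refine isClosed_iInter fun n => ?_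
    have hA : Continuous fun p : Fin k × Fin k => A p.1 p.2 := continuous_of_discreteTopology
    have hp : Continuous fun ω : ℕ → Fin k => (ω n, ω (n + 1)) :=
      (continuous_apply n).prodMk (continuous_apply (n + 1))
    have hc : Continuous fun ω : ℕ → Fin k => A (ω n) (ω (n + 1)) := hA.comp hp
    exact isClosed_eq hc continuous_const
  exact isCompact_iff_compactSpace.mp h.isCompact

theorem iterate_shiftMap_coord {k : ℕ} (A : Fin k → Fin k → Bool) (i j : ℕ) (ω : SigmaA A) :
    ((shiftMap A)^[i] ω).1 j = ω.1 (j + i) := by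
  induction i generalizing ω with
  | zero => rfl
  | succ i ih =>
    rw [Function.iterate_succ_apply, ih]
    simp only [shiftMap]
    congr 1

theorem SigmaA.dist_le_iff {k : ℕ} {A : Fin k → Fin k → Bool} {m : ℕ} {x y : SigmaA A} :
    dist x y ≤ (1 / 2) ^ m ↔ ∀ i < m, x.1 i = y.1 i := by
  rw [show dist x y = dist x.1 y.1 from rfl, ← PiNat.mem_cylinder_iff_dist_le]
  rfl

/-- The initial word of length `n` of a point of the shift. -/
def SigmaA.word {k : ℕ} {A : Fin k → Fin k → Bool} (n : ℕ) (ω : SigmaA A) : Fin n → Fin k :=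
  fun i => ω.1 i

theorem SigmaA.measurable_word {k : ℕ} {A : Fin k → Fin k → Bool} (n : ℕ) :
    Measurable (SigmaA.word n : SigmaA A → Fin n → Fin k) :=
  measurable_pi_lambda _ fun i => (SigmaA.continuous_coord A i).measurable

theorem cylinderSet_eq_preimage {k : ℕ} (A : Fin k → Fin k → Bool) {n : ℕ} (w : Fin n → Fin k) :
    cylinderSet A w = SigmaA.word n ⁻¹' {w} := by
  ext ω
  simp [cylinderSet, SigmaA.word, funext_iff]

theorem mul_le_birkhoff {f : X → X} {ψ : X → ℝ} {c : ℝ} (hc : ∀ x, c ≤ ψ x) (n : ℕ) (x : X) :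
    n * c ≤ birkhoff f ψ n x := by
  simpa [birkhoff] using
    Finset.card_nsmul_le_sum (Finset.range n) (fun i => ψ (f^[i] x)) c fun i _ => hc _

theorem birkhoff_le_mul {f : X → X} {φ : X → ℝ} {c : ℝ} (hc : ∀ x, φ x ≤ c) (n : ℕ) (x : X) :
    birkhoff f φ n x ≤ n * c := by
  simpa [birkhoff] using
    Finset.sum_le_card_nsmul (Finset.range n) (fun i => φ (f^[i] x)) c fun i _ => hc _

theorem STset_le_of_pos {f : X → X} {ψ : X → ℝ} {c T : ℝ} (hc : 0 < c) (hψ : ∀ x, c ≤ ψ x)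
    {n : ℕ} (hn : n ∈ STset f ψ T) : (n : ℝ) ≤ T / c := by
  obtain ⟨x, hx, -⟩ := hn
  rw [le_div_iff₀ hc]
  exact (mul_le_birkhoff hψ n x).trans hx

theorem exists_mem_Xset {f : X → X} {ψ : X → ℝ} {c T : ℝ} (hc : 0 < c) (hψ : ∀ x, c ≤ ψ x)
    (hT : 0 ≤ T) (x : X) : ∃ n, x ∈ Xset f ψ T n := by
  classical
  have h : ∃ n, T < birkhoff f ψ n x := by
    obtain ⟨n, hn⟩ := exists_nat_gt (T / c)
    exact ⟨n, ((div_lt_iff₀ hc).mp hn).trans_le (mul_le_birkhoff hψ n x)⟩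
  have h0 : Nat.find h ≠ 0 := by
    intro h0
    have := Nat.find_spec h
    rw [h0] at this
    simp [birkhoff] at this
    linarith
  obtain ⟨n, hn⟩ := Nat.exists_eq_succ_of_ne_zero h0
  refine ⟨n, not_lt.mp (Nat.find_min h (by omega)), ?_⟩
  have := Nat.find_spec h
  rwa [hn] at this

theorem tsum_indicator_STset {f : X → X} {ψ : X → ℝ} {c T : ℝ} (hc : 0 < c)
    (hψ : ∀ x, c ≤ ψ x) (a : ℕ → ℝ) :
    ∑' n, (STset f ψ T).indicator a n =
      ∑ n ∈ Finset.range (⌊T / c⌋₊ + 1), (STset f ψ T).indicator a n := by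
  refine tsum_eq_sum fun n hn => Set.indicator_of_notMem (fun h => hn ?_) _
  exact Finset.mem_range.mpr (Nat.lt_succ_of_le (Nat.le_floor (STset_le_of_pos hc hψ h)))

/-- Every admissible family of spanning sets contributes at least `exp (-(T / c * C))`. -/
theorem exp_le_of_isSpanningSet [MetricSpace X] [Nonempty X] {f : X → X} {φ ψ : X → ℝ}
    {c C T ε : ℝ} (hc : 0 < c) (hψ : ∀ x, c ≤ ψ x) (hC : 0 ≤ C) (hφ : ∀ x, -C ≤ φ x)
    (hT : 0 ≤ T) {F : ℕ → Finset X}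
    (hF : ∀ n ∈ STset f ψ T, IsSpanningSet f n ε (Xset f ψ T n) (F n)) :
    Real.exp (-(T / c * C)) ≤ ∑' n : ℕ, (STset f ψ T).indicator
        (fun n => ∑ x ∈ F n, Real.exp (birkhoff f φ n x)) n := by
  obtain ⟨x⟩ := ‹Nonempty X›
  obtain ⟨n, hn⟩ := exists_mem_Xset (f := f) hc hψ hT x
  have hnS : n ∈ STset f ψ T := ⟨x, hn⟩
  obtain ⟨y, hy, -⟩ := hF n hnS x hn
  have hnT := STset_le_of_pos hc hψ hnS
  rw [tsum_indicator_STset hc hψ]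
  calc Real.exp (-(T / c * C)) ≤ Real.exp (birkhoff f φ n y) := by
        refine Real.exp_le_exp.mpr (le_trans ?_ (mul_le_birkhoff hφ n y))
        nlinarith
    _ ≤ ∑ x ∈ F n, Real.exp (birkhoff f φ n x) :=
        Finset.single_le_sum (f := fun x => Real.exp (birkhoff f φ n x))
          (fun _ _ => (Real.exp_pos _).le) hy
    _ = (STset f ψ T).indicator (fun n => ∑ x ∈ F n, Real.exp (birkhoff f φ n x)) n :=
        (Set.indicator_of_mem hnS (fun n => ∑ x ∈ F n, Real.exp (birkhoff f φ n x))).symm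
    _ ≤ _ := Finset.single_le_sum
        (f := (STset f ψ T).indicator (fun n => ∑ x ∈ F n, Real.exp (birkhoff f φ n x)))
        (fun _ _ => Set.indicator_nonneg
          (fun _ _ => Finset.sum_nonneg fun _ _ => (Real.exp_pos _).le) _)
        (Finset.mem_range.mpr (Nat.lt_succ_of_le (Nat.le_floor hnT)))

/-- One point from each cylinder of length `n + m` gives an `(n, (1/2)^m)`-spanning set. -/
theorem exists_isSpanningSet_shiftMap {k : ℕ} (A : Fin k → Fin k → Bool) (n m : ℕ) {ε : ℝ}
    (hε : (1 / 2) ^ m ≤ ε) :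
    ∃ F : Finset (SigmaA A), F.card ≤ k ^ (n + m) ∧
      ∀ Z, IsSpanningSet (shiftMap A) n ε Z F := by
  classical
  rcases isEmpty_or_nonempty (SigmaA A) with h | h
  · exact ⟨∅, by simp, fun _ y => (h.false y).elim⟩
  refine ⟨Finset.univ.image (Function.invFun (SigmaA.word (A := A) (n + m))), ?_, ?_⟩
  · exact Finset.card_image_le.trans (by simp)
  · intro Z y _
    refine ⟨_, Finset.mem_image_of_mem _ (Finset.mem_univ (SigmaA.word (n + m) y)), ?_⟩
    set z := Function.invFun (SigmaA.word (A := A) (n + m)) (SigmaA.word (n + m) y)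
    have hz : SigmaA.word (n + m) z = SigmaA.word (n + m) y := Function.invFun_eq ⟨y, rfl⟩
    refine Real.iSup_le (fun i => (SigmaA.dist_le_iff.mpr fun j hj => ?_).trans hε)
      (le_trans (by positivity) hε)
    rw [iterate_shiftMap_coord, iterate_shiftMap_coord]
    exact congrFun hz ⟨j + i, by omega⟩

theorem Qspan_shiftMap_le {k : ℕ} (A : Fin k → Fin k → Bool) {φ ψ : SigmaA A → ℝ}
    {c C T ε : ℝ} {m : ℕ} (hc : 0 < c) (hψ : ∀ x, c ≤ ψ x) (hC : 0 ≤ C) (hφ : ∀ x, φ x ≤ C)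
    (hT : 0 ≤ T) (hε : (1 / 2) ^ m ≤ ε) :
    Qspan (shiftMap A) φ ψ T ε ≤ Real.exp (T / c * (1 + k + C) + m * k) := by
  choose F hFc hFs using fun n => exists_isSpanningSet_shiftMap A n m hε
  have hmem : ∑' n : ℕ, (STset (shiftMap A) ψ T).indicator
      (fun n => ∑ x ∈ F n, Real.exp (birkhoff (shiftMap A) φ n x)) n ∈
      { r : ℝ | ∃ F : ℕ → Finset (SigmaA A),
    (∀ n ∈ STset (shiftMap A) ψ T,
      IsSpanningSet (shiftMap A) n ε (Xset (shiftMap A) ψ T n) (F n)) ∧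
    r = ∑' n : ℕ, Set.indicator (STset (shiftMap A) ψ T)
        (fun n => ∑ x ∈ F n, Real.exp (birkhoff (shiftMap A) φ n x)) n } :=
    ⟨F, fun n _ => hFs n _, rfl⟩
  refine (csInf_le ⟨0, ?_⟩ hmem).trans ?_
  · rintro r ⟨G, -, rfl⟩
    exact tsum_nonneg fun n => Set.indicator_nonneg
      (fun _ _ => Finset.sum_nonneg fun _ _ => (Real.exp_pos _).le) _
  rw [tsum_indicator_STset hc hψ]
  have hTc : 0 ≤ T / c := by positivity
  set N := ⌊T / c⌋₊
  have hN : (N : ℝ) ≤ T / c := Nat.floor_le hTc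
  have hterm : ∀ n ∈ Finset.range (N + 1), (STset (shiftMap A) ψ T).indicator
      (fun n => ∑ x ∈ F n, Real.exp (birkhoff (shiftMap A) φ n x)) n ≤
      Real.exp (T / c * (k + C) + m * k) := by
    intro n hn
    refine Set.indicator_le' (f := fun n => ∑ x ∈ F n, Real.exp (birkhoff (shiftMap A) φ n x))
      (g := fun _ => Real.exp (T / c * (k + C) + m * k)) ?_ ?_ n
    · intro n hn
      have hn := STset_le_of_pos hc hψ hn
      have hk : (k : ℝ) ≤ Real.exp k := by linarith [Real.add_one_le_exp (k : ℝ)]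
      calc ∑ x ∈ F n, Real.exp (birkhoff (shiftMap A) φ n x)
          ≤ (F n).card • Real.exp (n * C) := Finset.sum_le_card_nsmul _ _ _ fun x _ =>
            Real.exp_le_exp.mpr (birkhoff_le_mul hφ n x)
        _ ≤ Real.exp k ^ (n + m) * Real.exp (n * C) := by
            rw [nsmul_eq_mul]
            refine mul_le_mul_of_nonneg_right ?_ (Real.exp_pos _).le
            calc ((F n).card : ℝ) ≤ (k : ℝ) ^ (n + m) := by exact_mod_cast hFc n
              _ ≤ _ := by gcongr
        _ = Real.exp (n * (k + C) + m * k) := by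
            rw [← Real.exp_nat_mul, ← Real.exp_add]
            push_cast
            ring_nf
        _ ≤ _ := by gcongr
    · intro _ _
      positivity
  calc _ ≤ (N + 1 : ℝ) * Real.exp (T / c * (k + C) + m * k) := by
        simpa using Finset.sum_le_card_nsmul _ _ _ hterm
    _ ≤ Real.exp (T / c) * Real.exp (T / c * (k + C) + m * k) := by
        gcongr
        linarith [Real.add_one_le_exp (T / c)]
    _ = _ := by
        rw [← Real.exp_add]
        ring_nf

theorem exp_le_Qspan_shiftMap {k : ℕ} (A : Fin k → Fin k → Bool) [Nonempty (SigmaA A)]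
    {φ ψ : SigmaA A → ℝ} {c C T ε : ℝ} (hc : 0 < c) (hψ : ∀ x, c ≤ ψ x) (hC : 0 ≤ C)
    (hφ : ∀ x, -C ≤ φ x) (hT : 0 ≤ T) (hε : 0 < ε) :
    Real.exp (-(T / c * C)) ≤ Qspan (shiftMap A) φ ψ T ε := by
  obtain ⟨m, hm⟩ := exists_pow_lt_of_lt_one hε (by norm_num : (1 / 2 : ℝ) < 1)
  choose F _ hFs using fun n => exists_isSpanningSet_shiftMap A n m hm.le
  refine le_csInf ⟨_, F, fun n _ => hFs n _, rfl⟩ ?_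
  rintro r ⟨G, hG, rfl⟩
  exact exp_le_of_isSpanningSet hc hψ hC hφ hT hG

/-- The induced pressure of continuous potentials on a Markov shift is a real number. -/
theorem exists_inducedPressure_eq_coe {k : ℕ} (A : Fin k → Fin k → Bool) [Nonempty (SigmaA A)]
    {φ ψ : SigmaA A → ℝ} (hφ : Continuous φ) (hψ : Continuous ψ) (hpos : ∀ ω, 0 < ψ ω) :
    ∃ p : ℝ, inducedPressure (shiftMap A) φ ψ = p := by
  obtain ⟨x₀, -, hx₀⟩ := isCompact_univ.exists_isMinOn univ_nonempty hψ.continuousOn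
  have hc : 0 < ψ x₀ := hpos x₀
  have hcψ : ∀ x, ψ x₀ ≤ ψ x := fun x => hx₀ (mem_univ x)
  set c := ψ x₀
  obtain ⟨C, hC⟩ := isCompact_univ.exists_bound_of_continuousOn hφ.continuousOn
  have hC' : ∀ x, |φ x| ≤ C := fun x => hC x (mem_univ x)
  have hC0 : 0 ≤ C := (abs_nonneg _).trans (hC' x₀)
  have hlow : ((-(C / c) : ℝ) : EReal) ≤ inducedPressure (shiftMap A) φ ψ := by
    refine le_iSup₂_of_le 1 one_pos (le_limsup_of_frequently_le ?_)
    refine (Eventually.frequently ?_)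
    filter_upwards [eventually_gt_atTop 0] with T hT
    have h := exp_le_Qspan_shiftMap A hc hcψ hC0 (fun x => (abs_le.mp (hC' x)).1) hT.le one_pos
    have h' := (Real.le_log_iff_exp_le ((Real.exp_pos _).trans_le h)).mpr h
    refine EReal.coe_le_coe_iff.mpr ?_
    rw [inv_mul_eq_div, le_div_iff₀ hT]
    calc _ = -(T / c * C) := by ring
      _ ≤ _ := h'
  have hup : inducedPressure (shiftMap A) φ ψ ≤ (((1 + k + C) / c + k : ℝ) : EReal) := by
    refine iSup₂_le fun ε hε => limsup_le_of_le (by isBoundedDefault) ?_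
    obtain ⟨m, hm⟩ := exists_pow_lt_of_lt_one hε (by norm_num : (1 / 2 : ℝ) < 1)
    filter_upwards [eventually_gt_atTop 0, eventually_ge_atTop (m : ℝ)] with T hT hTm
    have h := exp_le_Qspan_shiftMap A hc hcψ hC0 (fun x => (abs_le.mp (hC' x)).1) hT.le hε
    have h' := Qspan_shiftMap_le A hc hcψ hC0 (fun x => (abs_le.mp (hC' x)).2) hT.le hm.le
    have h'' := (Real.log_le_iff_le_exp ((Real.exp_pos _).trans_le h)).mpr h'
    refine EReal.coe_le_coe_iff.mpr ?_
    rw [inv_mul_eq_div, div_le_iff₀ hT]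
    calc _ ≤ _ := h''
      _ ≤ T / c * (1 + k + C) + T * k := by gcongr
      _ = _ := by ring
  exact ⟨_, (EReal.coe_toReal (ne_top_of_le_ne_top (EReal.coe_ne_top _) hup)
    (ne_bot_of_le_ne_bot (EReal.coe_ne_bot _) hlow)).symm⟩


section FiniteValued

variable [MeasurableSpace X] {μ : Measure X} [IsProbabilityMeasure μ]
  {β : Type*} [Fintype β] [MeasurableSpace β] [MeasurableSingletonClass β]

theorem integrable_comp_finite {b : X → β} (hb : Measurable b) (F : β → ℝ) :
    Integrable (fun x => F (b x)) μ :=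
  Integrable.comp_measurable (g := F) (Integrable.of_finite) hb

theorem integral_comp_finite {b : X → β} (hb : Measurable b) (F : β → ℝ) :
    ∫ x, F (b x) ∂μ = ∑ v, μ.real (b ⁻¹' {v}) * F v := by
  have : IsProbabilityMeasure (μ.map b) := Measure.isProbabilityMeasure_map hb.aemeasurable
  rw [← integral_map hb.aemeasurable (measurable_of_finite F).aestronglyMeasurable,
    integral_fintype Integrable.of_finite]
  simp [map_measureReal_apply hb (measurableSet_singleton _)]

/-- The Gibbs inequality: the entropy of a finite-valued map `u ∘ b` is at most the cross entropy
of `b` with respect to a subprobability vector. -/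
theorem sum_negMulLog_le_integral {α : Type*} [Fintype α] [MeasurableSpace α]
    [MeasurableSingletonClass α] {b : X → β} (hb : Measurable b) (u : β → α) {G : β → ℝ}
    (hG0 : ∀ v, 0 ≤ G v) (hG : ∀ x, 0 < G (b x)) (hG1 : ∑ v, G v ≤ 1) :
    ∑ a, Real.negMulLog (μ.real ((fun x => u (b x)) ⁻¹' {a})) ≤
      ∫ x, -Real.log (G (b x)) ∂μ := by
  set R : α → ℝ := fun a => μ.real ((fun x => u (b x)) ⁻¹' {a})
  have hL : ∑ a, Real.negMulLog (R a) = ∑ v, μ.real (b ⁻¹' {v}) * -Real.log (R (u v)) := by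
    rw [← integral_comp_finite hb (fun v => -Real.log (R (u v))),
      integral_comp_finite (b := fun x => u (b x)) ((measurable_of_finite u).comp hb)
        (fun a => -Real.log (R a))]
    refine Finset.sum_congr rfl fun a _ => ?_
    simp [Real.negMulLog, R]
  have hP : ∑ v, μ.real (b ⁻¹' {v}) = 1 := by
    simpa using (integral_comp_finite (μ := μ) hb (fun _ => 1)).symm
  have key : ∀ v, μ.real (b ⁻¹' {v}) * -Real.log (R (u v)) ≤
      μ.real (b ⁻¹' {v}) * -Real.log (G v) + (G v - μ.real (b ⁻¹' {v})) := by
    intro v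
    rcases eq_or_lt_of_le (measureReal_nonneg (μ := μ) (s := b ⁻¹' {v})) with h0 | h0
    · simpa [← h0] using hG0 v
    have hR : μ.real (b ⁻¹' {v}) ≤ R (u v) :=
      measureReal_mono fun x hx => congrArg u hx
    obtain ⟨x, rfl⟩ : ∃ x, b x = v := nonempty_of_measureReal_ne_zero h0.ne'
    have hR0 := h0.trans_le hR
    have hlog := Real.log_le_sub_one_of_pos (div_pos (hG x) hR0)
    rw [Real.log_div (hG x).ne' hR0.ne'] at hlog
    have h1 : μ.real (b ⁻¹' {b x}) * (G (b x) / R (u (b x))) ≤ G (b x) := by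
      rw [mul_div_assoc', div_le_iff₀ hR0, mul_comm]
      exact mul_le_mul_of_nonneg_left hR (hG0 _)
    nlinarith [mul_le_mul_of_nonneg_left hlog h0.le]
  rw [hL, integral_comp_finite hb (fun v => -Real.log (G v))]
  calc _ ≤ ∑ v, (μ.real (b ⁻¹' {v}) * -Real.log (G v) + (G v - μ.real (b ⁻¹' {v}))) :=
        Finset.sum_le_sum fun v _ => key v
    _ ≤ _ := by
        rw [Finset.sum_add_distrib, Finset.sum_sub_distrib, hP]
        linarith

end FiniteValued

section Invariance

variable [MeasurableSpace X] {μ : Measure X} {f : X → X}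

theorem MeasureTheory.MeasurePreserving.integral_comp_iterate (hf : MeasurePreserving f μ μ)
    {F : X → ℝ} (hF : Integrable F μ) (i : ℕ) : ∫ x, F (f^[i] x) ∂μ = ∫ x, F x ∂μ := by
  have h := hf.iterate i
  have hF' : AEStronglyMeasurable F (μ.map f^[i]) := by
    rw [h.map_eq]
    exact hF.1
  rw [← integral_map h.aemeasurable hF', h.map_eq]

theorem MeasureTheory.MeasurePreserving.integrable_comp_iterate (hf : MeasurePreserving f μ μ)
    {F : X → ℝ} (hF : Integrable F μ) (i : ℕ) : Integrable (fun x => F (f^[i] x)) μ :=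
  (hf.iterate i).integrable_comp_of_integrable hF

theorem integrable_birkhoff (hf : MeasurePreserving f μ μ) {F : X → ℝ} (hF : Integrable F μ)
    (n : ℕ) : Integrable (birkhoff f F n) μ :=
  integrable_finsetSum _ fun i _ => hf.integrable_comp_iterate hF i

theorem integral_birkhoff (hf : MeasurePreserving f μ μ) {F : X → ℝ} (hF : Integrable F μ)
    (n : ℕ) : ∫ x, birkhoff f F n x ∂μ = n * ∫ x, F x ∂μ := by
  simp only [birkhoff]
  rw [integral_finsetSum _ fun i _ => hf.integrable_comp_iterate hF i]
  simp [hf.integral_comp_iterate hF]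

end Invariance

/-- A measurable map to a finite set agrees, off a set of small measure, with a function of a
sufficiently long initial word. -/
theorem exists_word_approx {k l : ℕ} {A : Fin k → Fin k → Bool} (μ : Measure (SigmaA A))
    [IsProbabilityMeasure μ] {q : SigmaA A → Fin l} (hq : Measurable q) {δ : ℝ} (hδ : 0 < δ) :
    ∃ (M : ℕ) (g : (Fin M → Fin k) → Fin l), μ.real {x | q x ≠ g (SigmaA.word M x)} ≤ δ := by
  classical
  obtain ⟨x₀⟩ : Nonempty (SigmaA A) := nonempty_of_isProbabilityMeasure μ
  have : NeZero l := ⟨by have := (q x₀).pos; omega⟩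
  have hl : (0 : ℝ) < l := by exact_mod_cast (q x₀).pos
  have hreg : ∀ j : Fin l, ∃ C ⊆ q ⁻¹' {j}, IsCompact C ∧
      μ (q ⁻¹' {j} \ C) < ENNReal.ofReal (δ / l) := fun j =>
    (hq (measurableSet_singleton j)).exists_isCompact_sdiff_lt (measure_ne_top _ _)
      (by simpa using div_pos hδ hl)
  choose C hCsub hCc hCμ using hreg
  have hsep : ∀ i j, ∃ m : ℕ, i ≠ j → ∀ x ∈ C i, ∀ y ∈ C j,
      ¬ ∀ t < m, x.1 t = y.1 t := by
    intro i j
    by_cases hij : i = j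
    · exact ⟨0, fun h => (h hij).elim⟩
    have hd : Disjoint (C i) (C j) := by
      refine Set.disjoint_left.mpr fun x hi hj => hij ?_
      rw [← show q x = i from hCsub i hi, show q x = j from hCsub j hj]
    obtain ⟨r, hr, hdr⟩ := hd.exists_thickenings (hCc i) (hCc j).isClosed
    obtain ⟨m, hm⟩ := exists_pow_lt_of_lt_one hr (by norm_num : (1 / 2 : ℝ) < 1)
    refine ⟨m, fun _ x hx y hy hxy => ?_⟩
    have hyx : y ∈ Metric.thickening r (C i) := by
      refine Metric.mem_thickening_iff.mpr ⟨x, hx, ?_⟩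
      rw [dist_comm]
      exact (SigmaA.dist_le_iff.mpr hxy).trans_lt hm
    exact Set.disjoint_left.mp hdr hyx (Metric.self_subset_thickening hr _ hy)
  choose m hm using hsep
  set M := Finset.univ.sup fun p : Fin l × Fin l => m p.1 p.2
  have hmM : ∀ i j, m i j ≤ M := fun i j =>
    Finset.le_sup (f := fun p : Fin l × Fin l => m p.1 p.2) (Finset.mem_univ (i, j))
  set g : (Fin M → Fin k) → Fin l := fun d =>
    Classical.epsilon fun j => ∃ x ∈ C j, SigmaA.word M x = d
  have hg : ∀ j, ∀ x ∈ C j, g (SigmaA.word M x) = j := by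
    intro j x hx
    obtain ⟨y, hy, hyx⟩ := Classical.epsilon_spec
      (p := fun j => ∃ y ∈ C j, SigmaA.word M y = SigmaA.word M x) ⟨j, x, hx, rfl⟩
    by_contra hne
    exact hm _ _ hne y hy x hx fun t ht => congrFun hyx ⟨t, ht.trans_le (hmM _ _)⟩
  refine ⟨M, g, ?_⟩
  calc μ.real {x | q x ≠ g (SigmaA.word M x)} ≤ μ.real (⋃ j, q ⁻¹' {j} \ C j) := by
        refine measureReal_mono fun x hx => Set.mem_iUnion.mpr ⟨q x, rfl, fun hxC => hx ?_⟩
        exact (hg _ x hxC).symm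
    _ ≤ ∑ j, μ.real (q ⁻¹' {j} \ C j) := measureReal_iUnion_fintype_le _
    _ ≤ ∑ _j : Fin l, δ / l := Finset.sum_le_sum fun j _ =>
        (ENNReal.toReal_lt_of_lt_ofReal (hCμ j)).le
    _ = δ := by
        simp
        field_simp

section Gibbs

variable {k : ℕ} {A : Fin k → Fin k → Bool} {μ : Measure (SigmaA A)}

theorem cellOf_eq_preimage {f : X → X} {l n : ℕ} {P : Fin l → Set X} {q : X → Fin l}
    (hq : ∀ j, P j = q ⁻¹' {j}) (w : Fin n → Fin l) :
    cellOf f P w = (fun x (i : Fin n) => q (f^[(i : ℕ)] x)) ⁻¹' {w} := by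
  ext x
  simp [cellOf, hq, funext_iff]

theorem SigmaA.word_iterate {n m : ℕ} (j : ℕ) (x : SigmaA A) (hn : j + m ≤ n) :
    SigmaA.word m ((shiftMap A)^[j] x) =
      fun t : Fin m => SigmaA.word n x ⟨j + t, by omega⟩ := by
  funext t
  simp only [SigmaA.word, iterate_shiftMap_coord, add_comm]

/-- The information function of the partition into cylinders of length `n`. -/
noncomputable def cylinderInfo (μ : Measure (SigmaA A)) (n : ℕ) (x : SigmaA A) : ℝ :=
  -Real.log (μ.real (cylinderSet A (SigmaA.word n x)))

/-- The Gibbs property in logarithmic form. -/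
theorem IsGibbsMeasure.abs_cylinderInfo_sub_le {φ ψ : SigmaA A → ℝ} {K : ℝ} (hK : 1 < K)
    (hG : IsGibbsMeasure A φ ψ μ K) (n : ℕ) (x : SigmaA A) :
    0 < μ.real (cylinderSet A (SigmaA.word n x)) ∧
    |cylinderInfo μ n x - ((inducedPressure (shiftMap A) φ ψ).toReal *
      birkhoff (shiftMap A) ψ n x - birkhoff (shiftMap A) φ n x)| ≤ Real.log K := by
  obtain ⟨h1, h2⟩ := hG n (SigmaA.word n x) x fun _ => rfl
  rw [← measureReal_def] at h1 h2
  have hK0 : 0 < K := by linarith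
  have hpos : 0 < μ.real (cylinderSet A (SigmaA.word n x)) := by
    have h0 := (inv_pos.mpr hK0).trans_le h1
    exact (div_pos_iff_of_pos_right (Real.exp_pos _)).mp h0
  have hl1 := Real.log_le_log (inv_pos.mpr hK0) h1
  have hl2 := Real.log_le_log (div_pos hpos (Real.exp_pos _)) h2
  rw [Real.log_inv] at hl1
  rw [Real.log_div hpos.ne' (Real.exp_pos _).ne', Real.log_exp] at hl1 hl2
  refine ⟨hpos, abs_le.mpr ⟨?_, ?_⟩⟩ <;> simp only [cylinderInfo] <;> nlinarith

variable [IsProbabilityMeasure μ]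

theorem integrable_cylinderInfo (n : ℕ) : Integrable (cylinderInfo μ n) μ :=
  integrable_comp_finite (SigmaA.measurable_word n)
    fun w => -Real.log (μ.real (cylinderSet A w))

theorem integral_cylinderInfo (n : ℕ) :
    ∫ x, cylinderInfo μ n x ∂μ =
      ∑ w : Fin n → Fin k, Real.negMulLog (μ.real (SigmaA.word n ⁻¹' {w})) := by
  simp only [cylinderInfo]
  rw [integral_comp_finite (SigmaA.measurable_word n)
    fun w => -Real.log (μ.real (cylinderSet A w))]
  simp [cylinderSet_eq_preimage, Real.negMulLog]

theorem sum_measureReal_cylinderSet (n : ℕ) :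
    ∑ w : Fin n → Fin k, μ.real (cylinderSet A w) = 1 := by
  simpa [cylinderSet_eq_preimage] using
    (integral_comp_finite (μ := μ) (SigmaA.measurable_word (A := A) n) (fun _ => 1)).symm

/-- Subadditivity of the entropy of the cylinder partitions along multiples. -/
theorem integral_cylinderInfo_mul_le (hinv : MeasurePreserving (shiftMap A) μ μ)
    (hcyl : ∀ n (x : SigmaA A), 0 < μ.real (cylinderSet A (SigmaA.word n x))) (m n : ℕ) :
    ∫ x, cylinderInfo μ (m * n) x ∂μ ≤ m * ∫ x, cylinderInfo μ n x ∂μ := by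
  set b : SigmaA A → Fin m → Fin n → Fin k :=
    fun x j => SigmaA.word n ((shiftMap A)^[n * j] x)
  have hb : Measurable b := measurable_pi_lambda _ fun j =>
    (SigmaA.measurable_word n).comp (hinv.iterate _).measurable
  set u : (Fin m → Fin n → Fin k) → Fin (m * n) → Fin k :=
    fun v t => v (finProdFinEquiv.symm t).1 (finProdFinEquiv.symm t).2
  have hub : ∀ x, u (b x) = SigmaA.word (m * n) x := by
    intro x
    funext t
    obtain ⟨⟨i, j⟩, rfl⟩ := finProdFinEquiv.surjective t
    simp only [u, b, SigmaA.word, iterate_shiftMap_coord, Equiv.symm_apply_apply]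
    rfl
  have h := sum_negMulLog_le_integral (μ := μ) hb u
    (G := fun v => ∏ j, μ.real (cylinderSet A (v j)))
    (fun v => Finset.prod_nonneg fun _ _ => measureReal_nonneg)
    (fun x => Finset.prod_pos fun _ _ => hcyl _ _) (by
      rw [← Fintype.piFinset_univ, ← Finset.prod_univ_sum (fun _ => Finset.univ)
        (fun _ w => μ.real (cylinderSet A w))]
      simp [sum_measureReal_cylinderSet])
  simp only [hub] at h
  rw [integral_cylinderInfo]
  refine h.trans (le_of_eq ?_)
  have hlog : ∀ x, -Real.log (∏ j, μ.real (cylinderSet A (b x j))) =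
      ∑ j : Fin m, cylinderInfo μ n ((shiftMap A)^[n * j] x) := by
    intro x
    rw [Real.log_prod fun j _ => (hcyl _ _).ne', ← Finset.sum_neg_distrib]
    rfl
  simp only [hlog]
  rw [integral_finsetSum _ fun j _ =>
    hinv.integrable_comp_iterate (integrable_cylinderInfo n) _]
  simp [hinv.integral_comp_iterate (integrable_cylinderInfo n)]

/-- The probability vector putting mass about `1 - δ` on `j` and spreading `δ` uniformly. -/
noncomputable def guessWeight {l : ℕ} (δ : ℝ) (i j : Fin l) : ℝ :=
  (if i = j then 1 - δ else 0) + δ / l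

/-- Entropy of the itineraries of `q`, when `q` is guessed from words of length `M`. -/
theorem sum_negMulLog_itinerary_le (hinv : MeasurePreserving (shiftMap A) μ μ)
    (hcyl : ∀ n (x : SigmaA A), 0 < μ.real (cylinderSet A (SigmaA.word n x))) {l : ℕ}
    {q : SigmaA A → Fin l} (hq : Measurable q) {δ : ℝ} (hδ : 0 < δ) (hδ1 : δ < 1)
    {M : ℕ} {g : (Fin M → Fin k) → Fin l}
    (hg : μ.real {x | q x ≠ g (SigmaA.word M x)} ≤ δ) (n : ℕ) :
    ∑ w : Fin n → Fin l,
        Real.negMulLog (μ.real ((fun x (i : Fin n) => q ((shiftMap A)^[(i : ℕ)] x)) ⁻¹' {w})) ≤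
      ∫ x, cylinderInfo μ (n + M) x ∂μ +
        n * (-Real.log (1 - δ) + δ * -Real.log (δ / l)) := by
  classical
  obtain ⟨x₀⟩ : Nonempty (SigmaA A) := nonempty_of_isProbabilityMeasure μ
  have hl : (1 : ℝ) ≤ l := by exact_mod_cast Nat.one_le_iff_ne_zero.mpr (by
    have := (q x₀).pos
    omega)
  have hδl : 0 < δ / l := by positivity
  have hδl1 : δ / l ≤ 1 := div_le_one_of_le₀ (by linarith) (by linarith)
  have hπpos : ∀ i j : Fin l, 0 < guessWeight δ i j := by
    intro i j
    unfold guessWeight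
    split_ifs <;> linarith
  have hπsum : ∀ j : Fin l, ∑ i, guessWeight δ i j = 1 := by
    intro j
    simp only [guessWeight, Finset.sum_add_distrib, Finset.sum_ite_eq', Finset.mem_univ, if_true,
      Finset.sum_const, Finset.card_univ, Fintype.card_fin, nsmul_eq_mul]
    field_simp
    ring
  set b : SigmaA A → (Fin n → Fin l) × (Fin (n + M) → Fin k) :=
    fun x => (fun i => q ((shiftMap A)^[(i : ℕ)] x), SigmaA.word (n + M) x)
  have hb : Measurable b := (measurable_pi_lambda _ fun i =>
    hq.comp (hinv.iterate _).measurable).prodMk (SigmaA.measurable_word _)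
  set window : (Fin (n + M) → Fin k) → Fin n → Fin M → Fin k :=
    fun c i t => c ⟨i + t, by omega⟩
  have hwin : ∀ x (i : Fin n), window (SigmaA.word (n + M) x) i =
      SigmaA.word M ((shiftMap A)^[(i : ℕ)] x) := fun x i =>
    (SigmaA.word_iterate _ _ (by omega)).symm
  set G : (Fin n → Fin l) × (Fin (n + M) → Fin k) → ℝ := fun v =>
    μ.real (cylinderSet A v.2) * ∏ i, guessWeight δ (v.1 i) (g (window v.2 i))
  have hprod : ∀ (w : Fin n → Fin l) c, 0 < ∏ i : Fin n, guessWeight δ (w i) (g (window c i)) :=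
    fun w c => Finset.prod_pos fun _ _ => hπpos _ _
  have hGsum : ∑ v, G v = 1 := by
    rw [Fintype.sum_prod_type_right]
    simp only [G, ← Finset.mul_sum]
    have : ∀ c : Fin (n + M) → Fin k,
        ∑ w : Fin n → Fin l, ∏ i, guessWeight δ (w i) (g (window c i)) = 1 := by
      intro c
      rw [← Fintype.piFinset_univ,
        ← Finset.prod_univ_sum (fun _ => Finset.univ)
          (fun i j => guessWeight δ j (g (window c i)))]
      simp [hπsum]
    simp [this, sum_measureReal_cylinderSet]
  have h := sum_negMulLog_le_integral (μ := μ) hb Prod.fst (G := G)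
    (fun v => mul_nonneg measureReal_nonneg (hprod _ _).le)
    (fun x => mul_pos (hcyl _ _) (hprod _ _)) hGsum.le
  refine h.trans ?_
  set e : SigmaA A → ℝ := fun x => -Real.log (guessWeight δ (q x) (g (SigmaA.word M x)))
  have he : Integrable e μ :=
    integrable_comp_finite (hq.prodMk (SigmaA.measurable_word M))
      fun v : Fin l × (Fin M → Fin k) => -Real.log (guessWeight δ v.1 (g v.2))
  have hlog : ∀ x, -Real.log (G (b x)) = cylinderInfo μ (n + M) x +
      ∑ i : Fin n, e ((shiftMap A)^[(i : ℕ)] x) := by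
    intro x
    simp only [G, b, hwin]
    rw [Real.log_mul (hcyl _ _).ne' (Finset.prod_pos fun _ _ => hπpos _ _).ne',
      Real.log_prod fun _ _ => (hπpos _ _).ne', neg_add, ← Finset.sum_neg_distrib]
    rfl
  have hebound : ∫ x, e x ∂μ ≤ -Real.log (1 - δ) + δ * -Real.log (δ / l) := by
    have hbad : MeasurableSet {x | q x ≠ g (SigmaA.word M x)} :=
      (measurableSet_eq_fun hq
        ((measurable_of_finite g).comp (SigmaA.measurable_word M))).compl
    have hpt : ∀ x, e x ≤ -Real.log (1 - δ) +
        {x | q x ≠ g (SigmaA.word M x)}.indicator (fun _ => -Real.log (δ / l)) x := by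
      intro x
      by_cases hx : q x = g (SigmaA.word M x)
      · rw [Set.indicator_of_notMem (by simpa using hx), add_zero]
        simp only [e, guessWeight, hx, if_true]
        exact neg_le_neg (Real.log_le_log (by linarith) (by linarith))
      · rw [Set.indicator_of_mem (by simpa using hx)]
        simp only [e, guessWeight, hx, if_false, zero_add]
        linarith [Real.log_nonpos (by linarith : 0 ≤ 1 - δ) (by linarith)]
    have hindic : Integrable ({x | q x ≠ g (SigmaA.word M x)}.indicator
        (fun _ : SigmaA A => -Real.log (δ / l))) μ := (integrable_const _).indicator hbad
    refine (integral_mono he ((integrable_const _).add hindic) hpt).trans ?_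
    simp only [Pi.add_apply]
    rw [integral_add (integrable_const _) hindic, integral_indicator_const _ hbad]
    simp only [integral_const, probReal_univ, smul_eq_mul, one_mul]
    gcongr
    linarith [Real.log_nonpos hδl.le hδl1]
  simp only [hlog]
  rw [integral_add (integrable_cylinderInfo _)
    (integrable_finsetSum _ fun i _ => hinv.integrable_comp_iterate he _),
    integral_finsetSum _ fun i _ => hinv.integrable_comp_iterate he _]
  simp only [hinv.integral_comp_iterate he, Finset.sum_const, Finset.card_univ, Fintype.card_fin,
    nsmul_eq_mul]
  gcongr

theorem exists_guess_cost_lt {l : ℕ} (hl : 0 < l) {ε : ℝ} (hε : 0 < ε) :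
    ∃ δ : ℝ, 0 < δ ∧ δ < 1 ∧ -Real.log (1 - δ) + δ * -Real.log (δ / l) < ε := by
  have hcont : ContinuousAt (fun δ : ℝ => -Real.log (1 - δ) + (Real.negMulLog δ +
      δ * Real.log l)) 0 := by
    refine ContinuousAt.add (ContinuousAt.neg (ContinuousAt.log (by fun_prop) (by simp)))
      (Real.continuous_negMulLog.continuousAt.add (by fun_prop))
  have hlim : Tendsto (fun δ : ℝ => -Real.log (1 - δ) + (Real.negMulLog δ +
      δ * Real.log l)) (𝓝[>] 0) (𝓝 0) := by
    simpa using hcont.tendsto.mono_left nhdsWithin_le_nhds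
  obtain ⟨δ, h1, h2⟩ := ((hlim.eventually_lt_const hε).and
    (Ioo_mem_nhdsGT (zero_lt_one' ℝ))).exists
  refine ⟨δ, h2.1, h2.2, ?_⟩
  rw [Real.log_div h2.1.ne' (by positivity)]
  simp only [Real.negMulLog] at h1
  linarith

/-- If the information functions of the cylinder partitions have integrals within bounded distance
of `n * h`, then the Kolmogorov–Sinai entropy is `h`. -/
theorem ksEntropy_eq_of_cylinderInfo (hinv : MeasurePreserving (shiftMap A) μ μ)
    (hcyl : ∀ n (x : SigmaA A), 0 < μ.real (cylinderSet A (SigmaA.word n x))) {h L : ℝ}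
    (hL : ∀ n : ℕ, |∫ x, cylinderInfo μ n x ∂μ - n * h| ≤ L) :
    ksEntropy μ (shiftMap A) = h := by
  obtain ⟨x₀⟩ : Nonempty (SigmaA A) := nonempty_of_isProbabilityMeasure μ
  refine le_antisymm ?_ ?_
  · refine iSup_le fun l => iSup₂_le fun P hP => ?_
    obtain ⟨hmeas, hdisj, hcov⟩ := hP
    have hex : ∀ x, ∃ j, x ∈ P j := fun x => Set.mem_iUnion.mp (hcov ▸ Set.mem_univ x)
    choose q hq using hex
    have hqP : ∀ j, P j = q ⁻¹' {j} := by
      intro j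
      ext x
      refine ⟨fun hx => ?_, fun hx => hx ▸ hq x⟩
      by_contra hne
      exact Set.disjoint_left.mp (hdisj hne) (hq x) hx
    have hqm : Measurable q := measurable_to_countable' fun j => hqP j ▸ hmeas j
    refine EReal.le_of_forall_lt_iff_le.mp fun z hz => ?_
    have hz : h < z := EReal.coe_lt_coe_iff.mp hz
    obtain ⟨δ, hδ, hδ1, hcost⟩ := exists_guess_cost_lt (q x₀).pos
      (show 0 < (z - h) / 2 by linarith)
    obtain ⟨M, g, hg⟩ := exists_word_approx μ hqm hδ
    obtain ⟨n, hn⟩ := exists_nat_gt ((L + M * h) / ((z - h) / 2))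
    refine iInf_le_of_le n (EReal.coe_le_coe_iff.mpr ?_)
    have hb := sum_negMulLog_itinerary_le hinv hcyl hqm hδ hδ1 hg (n + 1)
    have hent : partitionEntropy μ (shiftMap A) P (n + 1) = ∑ w : Fin (n + 1) → Fin l,
        Real.negMulLog (μ.real ((fun x (i : Fin (n + 1)) =>
          q ((shiftMap A)^[(i : ℕ)] x)) ⁻¹' {w})) := by
      simp only [partitionEntropy, cellOf_eq_preimage hqP, measureReal_def]
    have hLn := (abs_le.mp (hL (n + 1 + M))).2
    rw [div_lt_iff₀ (by linarith)] at hn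
    rw [hent, inv_mul_le_iff₀ (by positivity)]
    push_cast at hb hLn
    have hcost' := mul_le_mul_of_nonneg_left hcost.le (show (0 : ℝ) ≤ n + 1 by positivity)
    nlinarith
  · set P : Fin k → Set (SigmaA A) := fun j => (fun x => x.1 0) ⁻¹' {j}
    have hP : IsMeasPartition P := by
      refine ⟨fun j => (SigmaA.continuous_coord A 0).measurable (measurableSet_singleton j),
        fun i j hij => ?_, ?_⟩
      · exact Set.disjoint_left.mpr fun x hi hj => hij (hi.symm.trans hj)
      · exact Set.eq_univ_of_forall fun x => Set.mem_iUnion.mpr ⟨x.1 0, rfl⟩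
    refine le_iSup_of_le k (le_iSup₂_of_le P hP (le_iInf fun n => EReal.coe_le_coe_iff.mpr ?_))
    have hent : partitionEntropy μ (shiftMap A) P (n + 1) =
        ∫ x, cylinderInfo μ (n + 1) x ∂μ := by
      rw [integral_cylinderInfo]
      have hcell : ∀ w, cellOf (shiftMap A) P w = SigmaA.word (n + 1) ⁻¹' {w} := by
        intro w
        rw [cellOf_eq_preimage (P := P) (q := fun x => x.1 0) fun j => rfl]
        simp only [iterate_shiftMap_coord, zero_add]
        rfl
      simp only [partitionEntropy, hcell, measureReal_def]
    rw [hent, le_inv_mul_iff₀ (by positivity)]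
    by_contra! hlt
    obtain ⟨m, hm⟩ := exists_nat_gt
      (L / ((n + 1) * h - ∫ x, cylinderInfo μ (n + 1) x ∂μ))
    rw [div_lt_iff₀ (by linarith)] at hm
    have h1 := (abs_le.mp (hL (m * (n + 1)))).1
    have h2 := integral_cylinderInfo_mul_le hinv hcyl m (n + 1)
    push_cast at h1
    nlinarith

end Gibbs

/-- a `σ`-invariant Gibbs measure for `ψ` and `φ` on a one-sided topological
Markov shift over a finite alphabet is an equilibrium measure for `ψ` and `φ`. -/
theorem stmt16 {k : ℕ} (hk : 0 < k) (A : Fin k → Fin k → Bool)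
    (φ ψ : SigmaA A → ℝ) (hφ : Continuous φ) (hψ : Continuous ψ)
    (hpos : ∀ ω, 0 < ψ ω)
    (μ : Measure (SigmaA A)) (hprob : IsProbabilityMeasure μ)
    (hinv : MeasurePreserving (shiftMap A) μ μ)
    (K : ℝ) (hK : 1 < K) (hGibbs : IsGibbsMeasure A φ ψ μ K) :
    IsEquilibriumMeasure (shiftMap A) φ ψ μ := by
  have : Nonempty (SigmaA A) := nonempty_of_isProbabilityMeasure μ
  obtain ⟨p, hp⟩ := exists_inducedPressure_eq_coe A hφ hψ hpos
  have hφi : Integrable φ μ :=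
    hφ.integrable_of_hasCompactSupport (HasCompactSupport.of_compactSpace φ)
  have hψi : Integrable ψ μ :=
    hψ.integrable_of_hasCompactSupport (HasCompactSupport.of_compactSpace ψ)
  have hψpos : 0 < ∫ x, ψ x ∂μ := by
    rw [integral_pos_iff_support_of_nonneg (fun x => (hpos x).le) hψi,
      Set.eq_univ_of_forall fun x => Function.mem_support.mpr (hpos x).ne']
    simp
  have hG := fun n x => hGibbs.abs_cylinderInfo_sub_le hK n x
  simp only [hp, EReal.toReal_coe] at hG
  have hL : ∀ n : ℕ, |∫ x, cylinderInfo μ n x ∂μ -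
      n * (p * ∫ x, ψ x ∂μ - ∫ x, φ x ∂μ)| ≤ Real.log K := by
    intro n
    have hS : ∫ x, (p * birkhoff (shiftMap A) ψ n x - birkhoff (shiftMap A) φ n x) ∂μ =
        n * (p * ∫ x, ψ x ∂μ - ∫ x, φ x ∂μ) := by
      rw [integral_sub ((integrable_birkhoff hinv hψi n).const_mul p)
        (integrable_birkhoff hinv hφi n), integral_const_mul, integral_birkhoff hinv hψi,
        integral_birkhoff hinv hφi]
      ring
    have hSi : Integrable (fun x => p * birkhoff (shiftMap A) ψ n x -
        birkhoff (shiftMap A) φ n x) μ :=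
      ((integrable_birkhoff hinv hψi n).const_mul p).sub (integrable_birkhoff hinv hφi n)
    rw [← hS, ← integral_sub (integrable_cylinderInfo n) hSi]
    simpa using norm_integral_le_of_norm_le_const (μ := μ)
      (Eventually.of_forall fun x => (Real.norm_eq_abs _).le.trans (hG n x).2)
  rw [IsEquilibriumMeasure, ksEntropy_eq_of_cylinderInfo hinv (fun n x => (hG n x).1) hL, hp,
    ← EReal.coe_add, ← EReal.coe_mul]
  congr 1
  field_simp
  ring
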